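/- arXiv:2307.02324 — 2 statements merged into one kernel-verified Lean document; each statement's English description precedes it below -/
import Mathlib

section
/- The map h ↦ ‖d_h‖_∞ from graphons to ℝ is lower semi-continuous with respect to the cut metric: if (f_n) is a sequence of graphons with δ_□(f_n, f) → 0, then liminf_{n→∞} ‖d_{f_n}‖_∞ ≥ ‖d_f‖_∞. -/
/-!
If `a < ‖d_f‖_∞`, the set `S` of `x ∈ [0,1]` with `d_f x > a` has measure `δ > 0`. A graphon `g`
with `δ_□(g, f) < ε δ` is at cut distance less than `ε δ` from some relabeling `f ∘ (φ × φ)`, whose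
degree function is `d_f ∘ φ`. Testing the cut distance on the rectangle `φ⁻¹(S) × [0,1]`, whose
first side also has measure `δ`, shows that the average of `d_g` over `φ⁻¹(S)` is more than `a - ε`
(`lt_degSup_of_cutMetric_lt`), hence so is `‖d_g‖_∞`.
-/

open MeasureTheory Filter Set
open scoped BigOperators

noncomputable section

/-- The unit interval `[0,1] ⊆ ℝ`. -/
def UI : Set ℝ := Set.Icc 0 1

/-- A graphon: a symmetric measurable function with values in `[0,1]`. -/
def IsGraphon (f : ℝ → ℝ → ℝ) : Prop :=
  (∀ x y, f x y = f y x) ∧ Measurable (Function.uncurry f) ∧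
    ∀ x y, f x y ∈ Set.Icc (0 : ℝ) 1

/-- Membership in `L²([0,1])`. -/
def MemL2 (u : ℝ → ℝ) : Prop :=
  Measurable u ∧ IntegrableOn (fun x => u x ^ 2) UI

/-- The `L²([0,1])`-norm. -/
def l2 (u : ℝ → ℝ) : ℝ := (∫ x in UI, u x ^ 2) ^ (1/2 : ℝ)

/-- The Laplacian graphon operator applied to `u`. -/
def lapApply (f : ℝ → ℝ → ℝ) (u : ℝ → ℝ) (x : ℝ) : ℝ :=
  ∫ y in UI, f x y * (u x - u y)

/-- The operator norm of the Laplacian graphon operator. -/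
def lapNorm (f : ℝ → ℝ → ℝ) : ℝ :=
  sSup {c | ∃ u : ℝ → ℝ, MemL2 u ∧ l2 u = 1 ∧ c = l2 (lapApply f u)}

/-- The degree function of a graphon. -/
def degFun (f : ℝ → ℝ → ℝ) (x : ℝ) : ℝ := ∫ y in UI, f x y

/-- The essential supremum of the degree function. -/
def degSup (f : ℝ → ℝ → ℝ) : ℝ := essSup (degFun f) (volume.restrict UI)

/-- Bernoulli relative entropy `R(a|b)`. -/
def relEnt (a b : ℝ) : ℝ :=
  a * Real.log (a / b) + (1 - a) * Real.log ((1 - a) / (1 - b))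

/-- The relative entropy functional `I_r(h)`. -/
def Ir (r h : ℝ → ℝ → ℝ) : ℝ :=
  ∫ p in UI ×ˢ UI, relEnt (h p.1 p.2) (r p.1 p.2)

/-- The downward rate function `ψ_r`. -/
def psiLow (r : ℝ → ℝ → ℝ) (β : ℝ) : ℝ :=
  sInf {c | ∃ h, IsGraphon h ∧ lapNorm h ≤ β ∧ c = Ir r h}

/-- A Lebesgue-measure-preserving bijection of `[0,1]`. -/
structure MPB where
  toFun : ℝ → ℝ
  bijOn : Set.BijOn toFun UI UI
  measurePreserving :
    MeasurePreserving toFun (volume.restrict UI) (volume.restrict UI)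

/-- The cut distance `d_□`. -/
def cutDist (f g : ℝ → ℝ → ℝ) : ℝ :=
  sSup {c | ∃ S T : Set ℝ, MeasurableSet S ∧ MeasurableSet T ∧ S ⊆ UI ∧ T ⊆ UI ∧
    c = |∫ x in S, ∫ y in T, (f x y - g x y)|}

/-- The cut metric `δ_□`. -/
def cutMetric (f g : ℝ → ℝ → ℝ) : ℝ :=
  sInf {c | ∃ φ : MPB, c = cutDist f (fun x y => g (φ.toFun x) (φ.toFun y))}

/-- The rate function `J_r` (infimum of `I_r` over relabelings). -/
def Jrate (r h : ℝ → ℝ → ℝ) : ℝ :=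
  sInf {c | ∃ φ : MPB, c = Ir r (fun x y => h (φ.toFun x) (φ.toFun y))}

/-- Open sets of graphons in the topology induced by the cut metric. -/
def CutOpen (O : Set (ℝ → ℝ → ℝ)) : Prop :=
  ∀ f ∈ O, ∃ ε > 0, ∀ g, IsGraphon g → cutMetric f g < ε → g ∈ O

/-- Closed sets of graphons in the topology induced by the cut metric. -/
def CutClosed (C : Set (ℝ → ℝ → ℝ)) : Prop :=
  ∀ f, IsGraphon f → f ∉ C → ∃ ε > 0, ∀ g, IsGraphon g → cutMetric f g < ε → g ∉ C

/-- Adjacency matrices of simple graphs on `N` vertices. -/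
abbrev AdjMat (N : ℕ) :=
  {A : Fin N → Fin N → Bool // (∀ i j, A i j = A j i) ∧ ∀ i, A i i = false}

/-- Probability weight of a configuration of the inhomogeneous ERRG. -/
def errgWeight (N : ℕ) (p : Fin N → Fin N → ℝ) (A : AdjMat N) : ℝ :=
  ∏ i : Fin N, ∏ j : Fin N,
    if i < j then (if A.1 i j then p i j else 1 - p i j) else 1

open Classical in
/-- The law of the inhomogeneous ERRG with edge probabilities `p`. -/
def errgProb (N : ℕ) (p : Fin N → Fin N → ℝ) (E : Set (AdjMat N)) : ℝ :=
  ∑ A : AdjMat N, if A ∈ E then errgWeight N p A else 0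

/-- Degree of vertex `i`. -/
def degRG {N : ℕ} (A : AdjMat N) (i : Fin N) : ℝ :=
  ∑ j : Fin N, if A.1 i j then (1 : ℝ) else 0

/-- The Laplacian matrix `L = D - A`. -/
def lapMat {N : ℕ} (A : AdjMat N) : Matrix (Fin N) (Fin N) ℝ :=
  fun i j => (if i = j then degRG A i else 0) - (if A.1 i j then 1 else 0)

/-- The largest eigenvalue of a matrix. -/
def lambdaMax {N : ℕ} (M : Matrix (Fin N) (Fin N) ℝ) : ℝ :=
  sSup {μ | ∃ v : Fin N → ℝ, v ≠ 0 ∧ M.mulVec v = μ • v}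

/-- The spectral norm (largest absolute value of an eigenvalue) of a matrix. -/
def specNorm {N : ℕ} (M : Matrix (Fin N) (Fin N) ℝ) : ℝ :=
  sSup {c | ∃ μ : ℝ, (∃ v : Fin N → ℝ, v ≠ 0 ∧ M.mulVec v = μ • v) ∧ c = |μ|}

/-- The `i`-th block of `[0,1]` divided into `N` blocks. -/
def blk (N : ℕ) (i : Fin N) : Set ℝ :=
  Set.Ico (((i : ℕ) : ℝ) / N) ((((i : ℕ) : ℝ) + 1) / N)

open Classical in
/-- The empirical graphon of a graph on `N` vertices. -/
def empGraphon (N : ℕ) (A : AdjMat N) (x y : ℝ) : ℝ :=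
  if ∃ i j : Fin N, A.1 i j = true ∧ x ∈ blk N i ∧ y ∈ blk N j then 1 else 0

/-- A function that is constant on the `N × N` blocks. -/
def IsBlockGraphon (N : ℕ) (f : ℝ → ℝ → ℝ) : Prop :=
  ∀ i j : Fin N, ∀ x₁ ∈ blk N i, ∀ x₂ ∈ blk N i, ∀ y₁ ∈ blk N j, ∀ y₂ ∈ blk N j,
    f x₁ y₁ = f x₂ y₂

/-- Edge probabilities induced by a block graphon. -/
def pOf (N : ℕ) (f : ℝ → ℝ → ℝ) (i j : Fin N) : ℝ :=
  f (((i : ℕ) : ℝ) / N) (((j : ℕ) : ℝ) / N)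

/-- The cumulant generating function `Λ_r(x,θ)`. -/
def Lam (r : ℝ → ℝ → ℝ) (x θ : ℝ) : ℝ :=
  ∫ y in UI, Real.log (r x y * Real.exp θ + 1 - r x y)

/-- The Legendre transform `J_r(x,β)`. -/
def Jfun (r : ℝ → ℝ → ℝ) (x β : ℝ) : ℝ :=
  ⨆ θ : ℝ, (θ * β - Lam r x θ)

/-- The upward rate function `ψ̂_r`. -/
def psiHat (r : ℝ → ℝ → ℝ) (β : ℝ) : ℝ :=
  ⨅ x : UI, Jfun r (x : ℝ) β

/-- The variance function `v_r`. -/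
def vr (r : ℝ → ℝ → ℝ) (x : ℝ) : ℝ := ∫ y in UI, r x y * (1 - r x y)

/-- The tilted kernel `r̂` (Cramér transform with parameter `θ`). -/
def tilt (r : ℝ → ℝ → ℝ) (θ x y : ℝ) : ℝ :=
  Real.exp θ * r x y / (Real.exp θ * r x y + 1 - r x y)

/-- The tilted mean degree. -/
def degMoment (r : ℝ → ℝ → ℝ) (x θ : ℝ) : ℝ := ∫ y in UI, tilt r θ x y

/-- Extended-real-valued logarithm with `log x = ⊥` for `x ≤ 0`. -/
def elog (x : ℝ) : EReal := if x ≤ 0 then ⊥ else ((Real.log x : ℝ) : EReal)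

/-- Standing assumptions on the reference graphon. -/
def GraphonAssump (r : ℝ → ℝ → ℝ) : Prop :=
  IsGraphon r ∧ (∀ x ∈ UI, ∀ y ∈ UI, r x y ∈ Set.Ioo (0:ℝ) 1) ∧
    IntegrableOn (fun p : ℝ × ℝ => Real.log (r p.1 p.2)) (UI ×ˢ UI) ∧
    IntegrableOn (fun p : ℝ × ℝ => Real.log (1 - r p.1 p.2)) (UI ×ˢ UI)

/-- Standing convergence assumptions on the block graphons `r_N`. -/
def SeqAssump (r : ℝ → ℝ → ℝ) (rN : ℕ → ℝ → ℝ → ℝ) : Prop :=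
  (∀ N, IsGraphon (rN N)) ∧ (∀ N, IsBlockGraphon N (rN N)) ∧
  (∀ N, ∀ x ∈ UI, ∀ y ∈ UI, rN N x y ∈ Set.Ioo (0:ℝ) 1) ∧
  (∀ᵐ p ∂(volume.restrict (UI ×ˢ UI)),
    Tendsto (fun N => rN N (p : ℝ × ℝ).1 p.2) atTop (nhds (r p.1 p.2))) ∧
  Tendsto (fun N => ∫ p in UI ×ˢ UI, |rN N p.1 p.2 - r p.1 p.2|) atTop (nhds 0) ∧
  Tendsto (fun N => ∫ p in UI ×ˢ UI,
    |Real.log (rN N p.1 p.2) - Real.log (r p.1 p.2)|) atTop (nhds 0) ∧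
  Tendsto (fun N => ∫ p in UI ×ˢ UI,
    |Real.log (1 - rN N p.1 p.2) - Real.log (1 - r p.1 p.2)|) atTop (nhds 0)

/-- A graphon bounded between `rm` and `rp`, `0 < rm ≤ rp < 1`. -/
def BoundedGraphon (r : ℝ → ℝ → ℝ) (rm rp : ℝ) : Prop :=
  IsGraphon r ∧ 0 < rm ∧ rm ≤ rp ∧ rp < 1 ∧
    ∀ x ∈ UI, ∀ y ∈ UI, rm ≤ r x y ∧ r x y ≤ rp

/-- Sup-norm convergence on `[0,1]²`. -/
def SupConv (r : ℝ → ℝ → ℝ) (rN : ℕ → ℝ → ℝ → ℝ) : Prop :=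
  ∀ ε > 0, ∃ N₀, ∀ N ≥ N₀, ∀ x ∈ UI, ∀ y ∈ UI, |rN N x y - r x y| ≤ ε

/-- Pointwise convergence on `[0,1]²`. -/
def PtConv (r : ℝ → ℝ → ℝ) (rN : ℕ → ℝ → ℝ → ℝ) : Prop :=
  ∀ x ∈ UI, ∀ y ∈ UI, Tendsto (fun N => rN N x y) atTop (nhds (r x y))

/-- Non-negative definiteness of a kernel. -/
def NonnegDef (r : ℝ → ℝ → ℝ) : Prop :=
  ∀ u : ℝ → ℝ, MemL2 u → 0 ≤ ∫ p in UI ×ˢ UI, r p.1 p.2 * u p.1 * u p.2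

/-- `μ` is an eigenvalue of the Laplacian operator `L_f` on `L²([0,1])`. -/
def lapEigen (f : ℝ → ℝ → ℝ) (μ : ℝ) : Prop :=
  ∃ u : ℝ → ℝ, MemL2 u ∧ (∫ x in UI, u x ^ 2) ≠ 0 ∧
    ∀ᵐ x ∂(volume.restrict UI), lapApply f u x = μ * u x

instance isProbabilityMeasure_restrict_UI :
    IsProbabilityMeasure ((volume : Measure ℝ).restrict UI) :=
  ⟨by simp [UI]⟩

lemma IsGraphon.integrable_section {f : ℝ → ℝ → ℝ} (hf : IsGraphon f) (x : ℝ) (μ : Measure ℝ)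
    [IsFiniteMeasure μ] : Integrable (f x) μ :=
  Integrable.of_bound (hf.2.1.comp measurable_prodMk_left).aestronglyMeasurable 1
    (ae_of_all _ fun y => by
      rw [Real.norm_eq_abs, abs_of_nonneg (hf.2.2 x y).1]; exact (hf.2.2 x y).2)

lemma IsGraphon.measurable_degFun {f : ℝ → ℝ → ℝ} (hf : IsGraphon f) : Measurable (degFun f) :=
  (hf.2.1.stronglyMeasurable.integral_prod_right' (ν := volume.restrict UI)).measurable

lemma IsGraphon.degFun_mem {f : ℝ → ℝ → ℝ} (hf : IsGraphon f) (x : ℝ) :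
    degFun f x ∈ Set.Icc (0 : ℝ) 1 := by
  refine ⟨integral_nonneg fun y => (hf.2.2 x y).1, ?_⟩
  calc degFun f x ≤ ∫ _ in UI, (1 : ℝ) :=
        integral_mono (hf.integrable_section x _) (integrable_const _) fun y => (hf.2.2 x y).2
    _ = 1 := by rw [integral_const]; simp

lemma IsGraphon.integrable_degFun {f : ℝ → ℝ → ℝ} (hf : IsGraphon f) (μ : Measure ℝ)
    [IsFiniteMeasure μ] : Integrable (degFun f) μ :=
  Integrable.of_bound hf.measurable_degFun.aestronglyMeasurable 1
    (ae_of_all _ fun y => by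
      rw [Real.norm_eq_abs, abs_of_nonneg (hf.degFun_mem y).1]; exact (hf.degFun_mem y).2)

lemma IsGraphon.ae_degFun_le {f : ℝ → ℝ → ℝ} (hf : IsGraphon f) :
    ∀ᵐ x ∂(volume.restrict UI), degFun f x ≤ degSup f :=
  ae_le_essSup (isBoundedUnder_of ⟨1, fun x => (hf.degFun_mem x).2⟩)

lemma IsGraphon.degSup_le {f : ℝ → ℝ → ℝ} (hf : IsGraphon f) {a : ℝ}
    (h : ∀ᵐ x ∂(volume.restrict UI), degFun f x ≤ a) : degSup f ≤ a :=
  essSup_le_of_ae_le a h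
    (show IsBoundedUnder (· ≥ ·) (ae (volume.restrict UI)) (degFun f) from
      isBoundedUnder_of ⟨0, fun x => (hf.degFun_mem x).1⟩).isCoboundedUnder_le

/-- The relabeling of a graphon by a measure-preserving bijection. -/
def relabel (f : ℝ → ℝ → ℝ) (φ : MPB) : ℝ → ℝ → ℝ := fun x y => f (φ.toFun x) (φ.toFun y)

lemma IsGraphon.relabel {f : ℝ → ℝ → ℝ} (hf : IsGraphon f) (φ : MPB) :
    IsGraphon (relabel f φ) := by
  have hφ := φ.measurePreserving.measurable
  exact ⟨fun x y => hf.1 _ _,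
    hf.2.1.comp ((hφ.comp measurable_fst).prodMk (hφ.comp measurable_snd)),
    fun x y => hf.2.2 _ _⟩

lemma IsGraphon.degFun_relabel {f : ℝ → ℝ → ℝ} (hf : IsGraphon f) (φ : MPB) (x : ℝ) :
    degFun (_root_.relabel f φ) x = degFun f (φ.toFun x) := by
  have h := integral_map φ.measurePreserving.measurable.aemeasurable
    (hf.integrable_section (φ.toFun x)
      ((volume.restrict UI).map φ.toFun)).aestronglyMeasurable
  rw [φ.measurePreserving.map_eq] at h
  exact h.symm

/-- The rectangles `S × [0,1]` are admissible in the cut distance, and they see only the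
degree functions. -/
lemma abs_setIntegral_degFun_sub_le_cutDist {f g : ℝ → ℝ → ℝ} (hf : IsGraphon f)
    (hg : IsGraphon g) {S : Set ℝ} (hS : MeasurableSet S) (hSU : S ⊆ UI) :
    |∫ x in S, (degFun f x - degFun g x)| ≤ cutDist f g := by
  refine le_csSup ⟨1, ?_⟩ ⟨S, UI, hS, measurableSet_Icc, hSU, subset_rfl, ?_⟩
  · rintro c ⟨S, T, -, -, hSU, hTU, rfl⟩
    have hle : ∀ {A : Set ℝ}, A ⊆ UI → volume.real A ≤ 1 := fun {A} hA => by
      calc volume.real A ≤ volume.real UI := measureReal_mono hA (by simp [UI])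
        _ = 1 := by simp [UI]
    have hlt : ∀ {A : Set ℝ}, A ⊆ UI → volume A < ⊤ := fun {A} hA =>
      (measure_mono hA).trans_lt (by simp [UI])
    have hin : ∀ x, ‖∫ y in T, (f x y - g x y)‖ ≤ 1 := fun x => by
      refine (norm_setIntegral_le_of_norm_le_const (C := 1) (hlt hTU) fun y _ => ?_).trans ?_
      · have h1 := hf.2.2 x y
        have h2 := hg.2.2 x y
        rw [Real.norm_eq_abs, abs_le]
        constructor <;> linarith [h1.1, h1.2, h2.1, h2.2]
      · simpa using hle hTU
    refine (norm_setIntegral_le_of_norm_le_const (C := 1) (hlt hSU) fun x _ => hin x).trans ?_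
    simpa using hle hSU
  · congr 2
    funext x
    exact (integral_sub (hf.integrable_section x _) (hg.integrable_section x _)).symm

lemma exists_relabel_cutDist_lt {f g : ℝ → ℝ → ℝ} {c : ℝ} (h : cutMetric g f < c) :
    ∃ φ : MPB, cutDist g (relabel f φ) < c := by
  have hne : {c | ∃ φ : MPB, c = cutDist g (relabel f φ)}.Nonempty :=
    ⟨_, ⟨id, Set.bijOn_id _, MeasurePreserving.id _⟩, rfl⟩
  obtain ⟨_, ⟨φ, rfl⟩, hφ⟩ := exists_lt_of_csInf_lt hne h
  exact ⟨φ, hφ⟩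

/-- The quantitative form of lower semicontinuity: if `d_f > a` on a set of measure `δ`, every
graphon at cut distance less than `ε δ` from `f` has maximum degree larger than `a - ε`. -/
lemma lt_degSup_of_cutMetric_lt {f g : ℝ → ℝ → ℝ} (hf : IsGraphon f) (hg : IsGraphon g)
    {a ε : ℝ} (hδ : 0 < (volume.restrict UI).real {x | a < degFun f x})
    (h : cutMetric g f < ε * (volume.restrict UI).real {x | a < degFun f x}) :
    a - ε < degSup g := by
  obtain ⟨φ, hφ⟩ := exists_relabel_cutDist_lt h
  set P : Set ℝ := φ.toFun ⁻¹' {x | a < degFun f x} with hP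
  have hmS : MeasurableSet {x | a < degFun f x} :=
    measurableSet_lt measurable_const hf.measurable_degFun
  have hmP : MeasurableSet P := φ.measurePreserving.measurable hmS
  have hPδ : (volume.restrict UI).real P = (volume.restrict UI).real {x | a < degFun f x} :=
    φ.measurePreserving.measureReal_preimage hmS.nullMeasurableSet
  have hcut := abs_setIntegral_degFun_sub_le_cutDist hg (hf.relabel φ)
    (hmP.inter (show MeasurableSet UI from measurableSet_Icc)) Set.inter_subset_right
  rw [← Measure.restrict_restrict hmP] at hcut
  have hup : ∫ x in P, (degFun g x - degFun (relabel f φ) x) ∂(volume.restrict UI)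
      ≤ ∫ _ in P, (degSup g - a) ∂(volume.restrict UI) := by
    refine integral_mono_ae
      ((hg.integrable_degFun _).sub ((hf.relabel φ).integrable_degFun _))
      (integrable_const _) ?_
    filter_upwards [ae_restrict_of_ae hg.ae_degFun_le, ae_restrict_mem hmP] with x h1 h2
    have h3 : a < degFun f (φ.toFun x) := h2
    rw [← hf.degFun_relabel φ x] at h3
    linarith
  rw [setIntegral_const, smul_eq_mul, hPδ] at hup
  have hlow := (abs_le.1 hcut).1
  by_contra! hcon
  have := mul_le_mul_of_nonneg_left (show degSup g - a ≤ -ε by linarith) hδ.le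
  linarith

/-- **Lower semicontinuity of the maximum-degree functional in the cut metric.** -/
theorem degree_sup_lsc
    (f : ℝ → ℝ → ℝ) (hf : IsGraphon f)
    (fn : ℕ → ℝ → ℝ → ℝ) (hfn : ∀ n, IsGraphon (fn n))
    (hconv : Tendsto (fun n => cutMetric (fn n) f) atTop (nhds 0)) :
    degSup f ≤ Filter.liminf (fun n => degSup (fn n)) atTop := by
  refine le_of_forall_lt fun b hb => ?_
  obtain ⟨a, hba, ha⟩ := exists_between hb
  obtain ⟨c, hbc, hca⟩ := exists_between hba
  have hδ : 0 < (volume.restrict UI).real {x | a < degFun f x} := by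
    refine ENNReal.toReal_pos (fun h0 => ?_) (measure_ne_top _ _)
    refine absurd (hf.degSup_le (a := a) ?_) (not_le.2 ha)
    simpa [ae_iff] using h0
  have hev := hconv.eventually_lt_const (mul_pos (sub_pos.2 hca) hδ)
  refine hbc.trans_le (le_liminf_of_le ?_ ?_)
  · exact (show IsBoundedUnder (· ≤ ·) atTop fun n => degSup (fn n) from
      isBoundedUnder_of ⟨1, fun n => (hfn n).degSup_le
        (ae_of_all _ fun x => ((hfn n).degFun_mem x).2)⟩).isCoboundedUnder_ge
  · filter_upwards [hev] with n hn
    have := lt_degSup_of_cutMetric_lt hf (hfn n) hδ hn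
    linarith
end
end

section
/- Let h : [0,1]² → (0,1) be a graphon with log h, log(1−h) ∈ L¹([0,1]²), and let (h_N) be a sequence of graphons, each constant on the blocks [(i−1)/N,i/N) × [(j−1)/N,j/N), 1 ≤ i,j ≤ N, with ‖h_N − h‖_∞ → 0. Let h^{G_N} be the empirical graphon of the inhomogeneous Erdős–Rényi random graph G_N with reference graphon h_N. Then ‖L_{h^{G_N}}‖ → ‖L_h‖ in probability, i.e., for every ε > 0, P_N(|‖L_{h^{G_N}}‖ − ‖L_h‖| > ε) → 0 as N → ∞. -/
/-!
The map `f ↦ ‖L_f‖` is Lipschitz for the operator norm of `L_f - L_g = L_{f - g}`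
(`abs_lapNorm_sub_le`), so it suffices to bound the Laplacian of two difference kernels.

* For `h_N - h`, bounded by `η` on the unit square, the Laplacian has norm at most `2 η`
  (`l2_lapApply_le`).
* For `h^{G_N} - h_N`, a block kernel, the Laplacian is multiplication by the centred degrees
  divided by `N` minus the integral operator of the centred adjacency matrix `B` divided by `N`,
  up to the diagonal blocks, which contribute `O(1 / N)`. Its norm is at most `4 δ` as soon as
  `1 ≤ δ N`, all row sums of `B` are at most `δ N` in absolute value and `tr (B⁴) ≤ (δ N)⁴`
  (`l2_lapApply_diff_le`), since `‖B‖⁴ ≤ tr (B⁴)` for symmetric `B` (`cAdj_mulVec_le`).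

The last two conditions fail with probability `O(1 / N)` (`errgProb_bad_le`). By independence of
the edges (`expG_prod`) the mixed moments of `B` in which some edge occurs exactly once vanish
(`expG_four`), whence `E tr (B⁴) ≤ 2 N³` (`expG_trace_four`) and Markov's inequality applies;
the row sums have the sub-Gaussian exponential moments `expG_exp_deg`, so a Chernoff bound
survives the union over the `N` vertices.
-/

open MeasureTheory Filter Set
open scoped BigOperators

noncomputable section

/-! ### Finite expectations over the random graph -/

/-- Expectation of `F` under the law of the inhomogeneous Erdős–Rényi graph. -/
def expG (N : ℕ) (p : Fin N → Fin N → ℝ) (F : AdjMat N → ℝ) : ℝ :=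
  ∑ A : AdjMat N, errgWeight N p A * F A

/-- The centred adjacency matrix, with zero diagonal. -/
def cAdj {N : ℕ} (p : Fin N → Fin N → ℝ) (A : AdjMat N) (i j : Fin N) : ℝ :=
  if i = j then 0 else (if A.1 i j then 1 else 0) - p i j

/-- A graph is the same as a free choice of its edges above the diagonal. -/
def adjEquiv (N : ℕ) : AdjMat N ≃ ({e : Fin N × Fin N // e.1 < e.2} → Bool) where
  toFun A e := A.1 e.1.1 e.1.2
  invFun g := ⟨fun i j => if h : i < j then g ⟨(i, j), h⟩
      else if h : j < i then g ⟨(j, i), h⟩ else false, by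
    constructor
    · intro i j
      rcases lt_trichotomy i j with h | h | h
      · simp [h, h.not_gt]
      · simp [h]
      · simp [h, h.not_gt]
    · intro i
      simp⟩
  left_inv A := by
    ext i j
    rcases lt_trichotomy i j with h | h | h
    · simp [h]
    · subst h
      simp [A.2.2 i]
    · simp [h, h.not_gt, A.2.1 i j]
  right_inv g := by
    ext e
    simp [e.2]

lemma prod_pairs (N : ℕ) (f : Fin N → Fin N → ℝ) :
    (∏ i, ∏ j, if i < j then f i j else 1) =
      ∏ e : {e : Fin N × Fin N // e.1 < e.2}, f e.1.1 e.1.2 := by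
  rw [← Fintype.prod_prod_type' (f := fun i j => if i < j then f i j else 1),
    ← Finset.prod_filter]
  exact (Finset.prod_subtype _ (by simp) _)

/-- Independence of the edges: the sum over graphs of a product over edges factorizes. -/
lemma sum_prod_edges (N : ℕ) (f : Fin N → Fin N → Bool → ℝ) :
    (∑ A : AdjMat N, ∏ i, ∏ j, if i < j then f i j (A.1 i j) else 1) =
      ∏ i, ∏ j, if i < j then f i j true + f i j false else 1 := by
  rw [prod_pairs]
  have h1 : ∀ e : {e : Fin N × Fin N // e.1 < e.2},
      f e.1.1 e.1.2 true + f e.1.1 e.1.2 false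
        = ∑ b ∈ (Finset.univ : Finset Bool), f e.1.1 e.1.2 b := by
    intro e
    simp
  simp_rw [h1]
  rw [Finset.prod_univ_sum, Fintype.piFinset_univ, ← (adjEquiv N).sum_comp]
  refine Finset.sum_congr rfl fun A _ => ?_
  rw [prod_pairs]
  rfl

/-- Product formula for the expectation of a product over edges. -/
lemma expG_prod (N : ℕ) (p : Fin N → Fin N → ℝ) (f : Fin N → Fin N → Bool → ℝ) :
    expG N p (fun A => ∏ i, ∏ j, if i < j then f i j (A.1 i j) else 1) =
      ∏ i, ∏ j, if i < j then p i j * f i j true + (1 - p i j) * f i j false else 1 := by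
  have := sum_prod_edges N (fun i j b => (if b then p i j else 1 - p i j) * f i j b)
  simp only [if_true, Bool.false_eq_true, if_false] at this
  rw [← this]
  unfold expG errgWeight
  refine Finset.sum_congr rfl fun A _ => ?_
  rw [← Finset.prod_mul_distrib]
  refine Finset.prod_congr rfl fun i _ => ?_
  rw [← Finset.prod_mul_distrib]
  refine Finset.prod_congr rfl fun j _ => ?_
  split_ifs <;> simp

lemma expG_one (N : ℕ) (p : Fin N → Fin N → ℝ) : expG N p (fun _ => 1) = 1 := by
  have := expG_prod N p (fun _ _ _ => 1)
  simpa using this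

lemma errgWeight_nonneg {N : ℕ} {p : Fin N → Fin N → ℝ}
    (hp : ∀ i j, p i j ∈ Set.Icc (0 : ℝ) 1) (A : AdjMat N) : 0 ≤ errgWeight N p A := by
  unfold errgWeight
  refine Finset.prod_nonneg fun i _ => Finset.prod_nonneg fun j _ => ?_
  have := (hp i j).1
  have := (hp i j).2
  split_ifs <;> linarith

lemma expG_mono {N : ℕ} {p : Fin N → Fin N → ℝ} (hp : ∀ i j, p i j ∈ Set.Icc (0 : ℝ) 1)
    {F G : AdjMat N → ℝ} (hFG : ∀ A, F A ≤ G A) : expG N p F ≤ expG N p G :=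
  Finset.sum_le_sum fun A _ => mul_le_mul_of_nonneg_left (hFG A) (errgWeight_nonneg hp A)

lemma expG_const (N : ℕ) (p : Fin N → Fin N → ℝ) (c : ℝ) : expG N p (fun _ => c) = c := by
  have h := expG_one N p
  unfold expG at h ⊢
  rw [← Finset.sum_mul]
  simp only [mul_one] at h
  rw [h, one_mul]

lemma expG_sum {N : ℕ} (p : Fin N → Fin N → ℝ) {ι : Type*} (s : Finset ι)
    (F : ι → AdjMat N → ℝ) :
    expG N p (fun A => ∑ k ∈ s, F k A) = ∑ k ∈ s, expG N p (F k) := by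
  unfold expG
  simp_rw [Finset.mul_sum]
  exact Finset.sum_comm

lemma expG_mul_const {N : ℕ} (p : Fin N → Fin N → ℝ) (F : AdjMat N → ℝ) (c : ℝ) :
    expG N p (fun A => F A * c) = expG N p F * c := by
  unfold expG
  rw [Finset.sum_mul]
  exact Finset.sum_congr rfl fun A _ => by ring

lemma errgProb_le_expG {N : ℕ} {p : Fin N → Fin N → ℝ}
    (hp : ∀ i j, p i j ∈ Set.Icc (0 : ℝ) 1) {E : Set (AdjMat N)} {F : AdjMat N → ℝ}
    (h0 : ∀ A, 0 ≤ F A) (h1 : ∀ A ∈ E, 1 ≤ F A) : errgProb N p E ≤ expG N p F := by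
  classical
  unfold errgProb expG
  refine Finset.sum_le_sum fun A _ => ?_
  have hw := errgWeight_nonneg hp A
  split_ifs with hA
  · exact le_mul_of_one_le_right hw (h1 A hA)
  · exact mul_nonneg hw (h0 A)

lemma errgProb_nonneg {N : ℕ} {p : Fin N → Fin N → ℝ}
    (hp : ∀ i j, p i j ∈ Set.Icc (0 : ℝ) 1) (E : Set (AdjMat N)) : 0 ≤ errgProb N p E := by
  classical
  unfold errgProb
  refine Finset.sum_nonneg fun A _ => ?_
  have hw := errgWeight_nonneg hp A
  split_ifs <;> simp [hw]

/-! ### Moments of the centred adjacency matrix -/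

lemma cAdj_symm {N : ℕ} {p : Fin N → Fin N → ℝ} (hs : ∀ i j, p i j = p j i) (A : AdjMat N)
    (i j : Fin N) : cAdj p A i j = cAdj p A j i := by
  unfold cAdj
  rw [A.2.1 i j, hs i j]
  by_cases h : i = j
  · simp [h]
  · simp [h, Ne.symm h]

lemma abs_cAdj_le {N : ℕ} {p : Fin N → Fin N → ℝ} (hp : ∀ i j, p i j ∈ Set.Icc (0 : ℝ) 1)
    (A : AdjMat N) (i j : Fin N) : |cAdj p A i j| ≤ 1 := by
  unfold cAdj
  have := (hp i j).1
  have := (hp i j).2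
  rw [abs_le]
  split_ifs <;> constructor <;> linarith

/-- `{a, b} = {i, j}` as unordered pairs. -/
abbrev sameEdge {N : ℕ} (i j a b : Fin N) : Prop := (a = i ∧ b = j) ∨ (a = j ∧ b = i)

/-- A single centred entry written as a product over all edges. -/
lemma cAdj_eq_prod {N : ℕ} {p : Fin N → Fin N → ℝ} (hs : ∀ i j, p i j = p j i) (A : AdjMat N)
    {i j : Fin N} (hij : i ≠ j) :
    cAdj p A i j = ∏ a, ∏ b, if a < b then
      (if sameEdge i j a b then (if A.1 a b then 1 else 0) - p a b else 1) else 1 := by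
  wlog h : i < j generalizing i j
  · rw [cAdj_symm hs, this hij.symm (lt_of_le_of_ne (not_lt.1 h) hij.symm)]
    simp only [sameEdge, or_comm]
  rw [Fintype.prod_eq_single i, Fintype.prod_eq_single j]
  · simp [h, cAdj, hij]
  · intro b hb
    simp [hb, hij]
  · intro a ha
    refine Finset.prod_eq_one fun b _ => ?_
    by_cases h1 : a < b
    · have h2 : ¬ sameEdge i j a b := by
        rintro (h2 | h2)
        · exact ha h2.1
        · rw [h2.1, h2.2] at h1
          exact h.not_gt h1
      rw [if_pos h1, if_neg h2]
    · rw [if_neg h1]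

/-- A product of four centred entries in which the first edge occurs only once has mean zero. -/
lemma expG_four {N : ℕ} {p : Fin N → Fin N → ℝ} (hs : ∀ i j, p i j = p j i)
    {i j a b c d e f : Fin N} (hij : i ≠ j) (hab : a ≠ b) (hcd : c ≠ d) (hef : e ≠ f)
    (h1 : ¬ sameEdge a b i j) (h2 : ¬ sameEdge c d i j) (h3 : ¬ sameEdge e f i j) :
    expG N p (fun A => cAdj p A i j * cAdj p A a b * cAdj p A c d * cAdj p A e f) = 0 := by
  wlog h : i < j generalizing i j
  · rw [← this (i := j) (j := i) hij.symm (by unfold sameEdge at *; tauto)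
      (by unfold sameEdge at *; tauto) (by unfold sameEdge at *; tauto)
      (lt_of_le_of_ne (not_lt.1 h) hij.symm)]
    simp_rw [cAdj_symm hs _ i j]
  obtain ⟨g, hg⟩ : ∃ g : Fin N → Fin N → Bool → ℝ, g = fun x y (t : Bool) =>
          (if sameEdge i j x y then (if t then 1 else 0) - p x y else 1) *
          (if sameEdge a b x y then (if t then 1 else 0) - p x y else 1) *
          (if sameEdge c d x y then (if t then 1 else 0) - p x y else 1) *
          (if sameEdge e f x y then (if t then 1 else 0) - p x y else 1) := ⟨_, rfl⟩
  have key : ∀ A : AdjMat N,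
      cAdj p A i j * cAdj p A a b * cAdj p A c d * cAdj p A e f =
      ∏ x, ∏ y, if x < y then g x y (A.1 x y) else 1 := by
    intro A
    subst hg
    rw [cAdj_eq_prod hs A hij, cAdj_eq_prod hs A hab, cAdj_eq_prod hs A hcd,
      cAdj_eq_prod hs A hef]
    simp only [← Finset.prod_mul_distrib]
    refine Finset.prod_congr rfl fun x _ => Finset.prod_congr rfl fun y _ => ?_
    by_cases hxy : x < y <;> simp [hxy]
  simp_rw [key]
  rw [expG_prod]
  refine Finset.prod_eq_zero (Finset.mem_univ i) (Finset.prod_eq_zero (Finset.mem_univ j) ?_)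
  rw [if_pos h]
  subst hg
  simp only [if_neg h1, if_neg h2, if_neg h3,
    if_pos (show sameEdge i j i j from Or.inl ⟨rfl, rfl⟩)]
  simp
  ring

/-- Entries of the squared centred adjacency matrix. -/
def cSq {N : ℕ} (p : Fin N → Fin N → ℝ) (A : AdjMat N) (i k : Fin N) : ℝ :=
  ∑ j, cAdj p A i j * cAdj p A k j

lemma expG_cSq_offdiag {N : ℕ} {p : Fin N → Fin N → ℝ} (hp : ∀ i j, p i j ∈ Set.Icc (0 : ℝ) 1)
    (hs : ∀ i j, p i j = p j i) {i k : Fin N} (hik : i ≠ k) :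
    expG N p (fun A => cSq p A i k ^ 2) ≤ N := by
  have h1 : ∀ A, cSq p A i k ^ 2 = ∑ j, ∑ j', cAdj p A i j * cAdj p A k j * cAdj p A i j' *
      cAdj p A k j' := by
    intro A
    rw [cSq, sq, Finset.sum_mul_sum]
    exact Finset.sum_congr rfl fun j _ => Finset.sum_congr rfl fun j' _ => by ring
  simp_rw [h1, expG_sum]
  have h2 : ∀ j j', expG N p (fun A => cAdj p A i j * cAdj p A k j * cAdj p A i j' *
      cAdj p A k j') ≤ if j = j' then 1 else 0 := by
    intro j j'
    split_ifs with hjj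
    · rw [← expG_one N p]
      refine expG_mono hp fun A => ?_
      refine (le_abs_self _).trans ?_
      rw [abs_mul, abs_mul, abs_mul]
      have := abs_cAdj_le hp A
      exact mul_le_one₀ (mul_le_one₀ (mul_le_one₀ (this _ _) (abs_nonneg _) (this _ _))
        (abs_nonneg _) (this _ _)) (abs_nonneg _) (this _ _)
    · by_cases hd : i = j ∨ k = j ∨ i = j' ∨ k = j'
      · refine le_of_eq ?_
        have : ∀ A : AdjMat N, cAdj p A i j * cAdj p A k j * cAdj p A i j' *
            cAdj p A k j' = 0 := by
          intro A
          rcases hd with h | h | h | h <;> simp [cAdj, h]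
        simp_rw [this]
        exact expG_const N p 0
      · push Not at hd
        obtain ⟨a1, a2, a3, a4⟩ := hd
        exact le_of_eq (expG_four hs a1 a2 a3 a4 (by unfold sameEdge; grind)
          (by unfold sameEdge; grind) (by unfold sameEdge; grind))
  calc _ ≤ ∑ j : Fin N, ∑ j' : Fin N, (if j = j' then (1:ℝ) else 0) :=
        Finset.sum_le_sum fun j _ => Finset.sum_le_sum fun j' _ => h2 j j'
    _ = N := by simp

/-- The fourth moment bound `E tr (B⁴) ≤ 2 N³`, where `tr (B⁴)` is the sum of the squared
entries of `B²`. -/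
lemma expG_trace_four {N : ℕ} {p : Fin N → Fin N → ℝ} (hp : ∀ i j, p i j ∈ Set.Icc (0 : ℝ) 1)
    (hs : ∀ i j, p i j = p j i) :
    expG N p (fun A => ∑ i, ∑ k, cSq p A i k ^ 2) ≤ 2 * (N : ℝ) ^ 3 := by
  simp_rw [expG_sum]
  have h2 : ∀ i k, expG N p (fun A => cSq p A i k ^ 2) ≤ (if i = k then (N : ℝ) ^ 2 else 0) + N := by
    intro i k
    split_ifs with h
    · have : expG N p (fun A => cSq p A i k ^ 2) ≤ expG N p (fun _ => (N : ℝ) ^ 2) := by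
        refine expG_mono hp fun A => ?_
        rw [sq_le_sq]
        refine (Finset.abs_sum_le_sum_abs _ _).trans ?_
        have : ∀ j ∈ (Finset.univ : Finset (Fin N)), |cAdj p A i j * cAdj p A k j| ≤ 1 := by
          intro j _
          rw [abs_mul]
          exact mul_le_one₀ (abs_cAdj_le hp A _ _) (abs_nonneg _) (abs_cAdj_le hp A _ _)
        refine (Finset.sum_le_sum this).trans ?_
        simp
      rw [expG_const] at this
      have h0 : (0 : ℝ) ≤ N := Nat.cast_nonneg N
      linarith
    · rw [zero_add]
      exact expG_cSq_offdiag hp hs h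
  refine (Finset.sum_le_sum fun i _ => Finset.sum_le_sum fun k _ => h2 i k).trans ?_
  refine le_of_eq ?_
  simp [Finset.sum_add_distrib]
  ring

/-- Sum over the edges incident to a given vertex. -/
lemma sum_incident {N : ℕ} (i : Fin N) (Y : Fin N → Fin N → ℝ) (hY : ∀ a b, Y a b = Y b a) :
    (∑ a, ∑ b, if a < b then (if a = i ∨ b = i then Y a b else 0) else 0) =
      ∑ j, if i = j then 0 else Y i j := by
  have h1 : ∀ a b : Fin N, (if a < b then (if a = i ∨ b = i then Y a b else 0) else 0) =
      (if a = i then (if i < b then Y i b else 0) else 0) +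
      (if b = i then (if a < i then Y a i else 0) else 0) := by
    intro a b
    by_cases ha : a = i
    · subst ha
      by_cases hb : b = a
      · subst hb
        simp
      · simp [hb]
    · by_cases hb : b = i
      · subst hb
        simp [ha]
      · simp [ha, hb]
  simp_rw [h1, Finset.sum_add_distrib]
  rw [Finset.sum_comm]
  simp only [Finset.sum_ite_eq', Finset.mem_univ, if_true]
  rw [← Finset.sum_add_distrib]
  refine Finset.sum_congr rfl fun j _ => ?_
  rcases lt_trichotomy i j with h | h | h
  · simp [h, h.not_gt, h.ne]
  · simp [h]
  · simp [h, h.not_gt, h.ne', hY]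

lemma bernoulli_mgf_le {q t : ℝ} (hq : q ∈ Set.Icc (0 : ℝ) 1) (ht : |t| ≤ 1) :
    q * Real.exp (t * (1 - q)) + (1 - q) * Real.exp (t * (0 - q)) ≤ Real.exp (t ^ 2) := by
  obtain ⟨h0, h1⟩ := hq
  have key : ∀ x : ℝ, |x| ≤ 1 → Real.exp x ≤ 1 + x + x ^ 2 := by
    intro x hx
    have := Real.abs_exp_sub_one_sub_id_le hx
    linarith [(abs_le.1 this).2]
  have e1 := key (t * (1 - q)) (by
    rw [abs_mul]
    exact mul_le_one₀ ht (abs_nonneg _) (by rw [abs_le]; constructor <;> linarith))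
  have e2 := key (t * (0 - q)) (by
    rw [abs_mul]
    exact mul_le_one₀ ht (abs_nonneg _) (by rw [abs_le]; constructor <;> linarith))
  have e3 := Real.add_one_le_exp (t ^ 2)
  have e4 := mul_le_mul_of_nonneg_left e1 h0
  have e5 := mul_le_mul_of_nonneg_left e2 (sub_nonneg.2 h1)
  have e6 : 0 ≤ t ^ 2 * (1 - q + q ^ 2) := by
    have : 0 ≤ 1 - q + q ^ 2 := by nlinarith
    positivity
  nlinarith

/-- Sub-Gaussian bound for the centred degree of a vertex. -/
lemma expG_exp_deg {N : ℕ} {p : Fin N → Fin N → ℝ} (hp : ∀ i j, p i j ∈ Set.Icc (0 : ℝ) 1)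
    (hs : ∀ i j, p i j = p j i) (i : Fin N) {t : ℝ} (ht : |t| ≤ 1) :
    expG N p (fun A => Real.exp (t * ∑ j, cAdj p A i j)) ≤ Real.exp (t ^ 2 * N) := by
  obtain ⟨g, hg⟩ : ∃ g : Fin N → Fin N → Bool → ℝ, g = fun a b (c : Bool) =>
      if a = i ∨ b = i then Real.exp (t * ((if c then 1 else 0) - p a b)) else 1 := ⟨_, rfl⟩
  have key : ∀ A : AdjMat N, Real.exp (t * ∑ j, cAdj p A i j) =
      ∏ a, ∏ b, if a < b then g a b (A.1 a b) else 1 := by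
    intro A
    have h1 := sum_incident i (fun a b => t * ((if A.1 a b then 1 else 0) - p a b))
      (fun a b => by rw [A.2.1 a b, hs a b])
    have h2 : t * ∑ j, cAdj p A i j =
        ∑ j, if i = j then 0 else t * ((if A.1 i j then 1 else 0) - p i j) := by
      rw [Finset.mul_sum]
      refine Finset.sum_congr rfl fun j _ => ?_
      unfold cAdj
      by_cases h : i = j <;> simp [h]
    rw [h2, ← h1, Real.exp_sum]
    refine Finset.prod_congr rfl fun a _ => ?_
    rw [Real.exp_sum]
    refine Finset.prod_congr rfl fun b _ => ?_
    simp only [hg]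
    split_ifs <;> simp
  simp_rw [key]
  rw [expG_prod]
  have h3 := sum_incident i (fun _ _ => t ^ 2) (fun _ _ => rfl)
  have h4 : (∑ j : Fin N, if i = j then 0 else t ^ 2) ≤ t ^ 2 * N := by
    calc _ ≤ ∑ j : Fin N, t ^ 2 := Finset.sum_le_sum fun j _ => by
          split_ifs
          · positivity
          · exact le_rfl
      _ = t ^ 2 * N := by simp [mul_comm]
  refine le_trans ?_ (Real.exp_le_exp.2 h4)
  rw [← h3, Real.exp_sum]
  have hpos : ∀ a b : Fin N, 0 ≤ (if a < b then
      p a b * g a b true + (1 - p a b) * g a b false else 1) := by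
    intro a b
    have e1 := (hp a b).1
    have e2 := sub_nonneg.2 (hp a b).2
    split_ifs
    · refine add_nonneg (mul_nonneg e1 ?_) (mul_nonneg e2 ?_) <;>
      · simp only [hg]
        split_ifs <;> positivity
    · exact zero_le_one
  refine Finset.prod_le_prod (fun a _ => Finset.prod_nonneg fun b _ => hpos a b) fun a _ => ?_
  rw [Real.exp_sum]
  refine Finset.prod_le_prod (fun b _ => hpos a b) fun b _ => ?_
  split_ifs with h5 h6
  · simpa [hg, h6] using bernoulli_mgf_le (hp a b) ht
  · simp [hg, h6]
  · simp

/-! ### The Laplacian of a bounded kernel on `L²([0,1])` -/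

instance : IsProbabilityMeasure (volume.restrict UI) :=
  ⟨by simp [UI]⟩

lemma measurableSet_UI : MeasurableSet UI := measurableSet_Icc

lemma l2_eq_sqrt (u : ℝ → ℝ) : l2 u = Real.sqrt (∫ x in UI, u x ^ 2) := by
  rw [l2, Real.sqrt_eq_rpow]

lemma MemL2.memLp {u : ℝ → ℝ} (hu : MemL2 u) : MemLp u 2 (volume.restrict UI) :=
  (memLp_two_iff_integrable_sq hu.1.aestronglyMeasurable).2 hu.2

lemma MemL2.integrable {u : ℝ → ℝ} (hu : MemL2 u) : Integrable u (volume.restrict UI) :=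
  hu.memLp.integrable one_le_two

lemma l2_eq_eLpNorm {u : ℝ → ℝ} (hu : MemL2 u) :
    l2 u = (eLpNorm u 2 (volume.restrict UI)).toReal := by
  rw [hu.memLp.eLpNorm_eq_integral_rpow_norm (by norm_num) (by norm_num),
    ENNReal.toReal_ofReal (by positivity), l2]
  norm_num

lemma l2_add_le {u v : ℝ → ℝ} (hu : MemL2 u) (hv : MemL2 v) (huv : MemL2 (u + v)) :
    l2 (u + v) ≤ l2 u + l2 v := by
  rw [l2_eq_eLpNorm hu, l2_eq_eLpNorm hv, l2_eq_eLpNorm huv,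
    ← ENNReal.toReal_add hu.memLp.eLpNorm_ne_top hv.memLp.eLpNorm_ne_top]
  exact ENNReal.toReal_mono
    (ENNReal.add_ne_top.2 ⟨hu.memLp.eLpNorm_ne_top, hv.memLp.eLpNorm_ne_top⟩)
    (eLpNorm_add_le hu.1.aestronglyMeasurable hv.1.aestronglyMeasurable one_le_two)

lemma l2_congr {u v : ℝ → ℝ} (h : ∀ x ∈ UI, u x = v x) : l2 u = l2 v := by
  unfold l2
  congr 1
  refine setIntegral_congr_fun measurableSet_UI fun x hx => ?_
  simp only [h x hx]

/-- Cauchy–Schwarz against the constant function. -/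
lemma sq_integral_le {μ : Measure ℝ} [IsFiniteMeasure μ] (hμ : 0 < μ.real univ) {u : ℝ → ℝ}
    (hu : Integrable u μ) (hu2 : Integrable (fun x => u x ^ 2) μ) :
    (∫ x, u x ∂μ) ^ 2 ≤ μ.real univ * ∫ x, u x ^ 2 ∂μ := by
  set M := μ.real univ
  set I := ∫ x, u x ∂μ
  have h0 : 0 ≤ ∫ x, (M * u x - I) ^ 2 ∂μ := integral_nonneg fun x => sq_nonneg _
  have h1 : ∫ x, (M * u x - I) ^ 2 ∂μ = M ^ 2 * (∫ x, u x ^ 2 ∂μ) - 2 * M * I * I + M * I ^ 2 := by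
    have : ∀ x, (M * u x - I) ^ 2 = M ^ 2 * u x ^ 2 - 2 * M * I * u x + I ^ 2 := by
      intro x
      ring
    simp_rw [this]
    have i1 : Integrable (fun x => M ^ 2 * u x ^ 2 - 2 * M * I * u x) μ :=
      (hu2.const_mul _).sub (hu.const_mul _)
    rw [integral_add i1 (integrable_const _),
      integral_sub (hu2.const_mul _) (hu.const_mul _), integral_const_mul, integral_const_mul,
      integral_const, smul_eq_mul]
  rw [h1] at h0
  have h2 : 0 ≤ M * (M * (∫ x, u x ^ 2 ∂μ) - I ^ 2) := by linarith
  have := nonneg_of_mul_nonneg_right h2 hμ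
  linarith

lemma measurable_lapApply {k : ℝ → ℝ → ℝ} (hk : Measurable (Function.uncurry k)) {u : ℝ → ℝ}
    (hu : Measurable u) : Measurable (lapApply k u) := by
  have : Measurable (Function.uncurry fun x y => k x y * (u x - u y)) := by
    have h1 : Measurable fun q : ℝ × ℝ => u q.1 := hu.comp measurable_fst
    have h2 : Measurable fun q : ℝ × ℝ => u q.2 := hu.comp measurable_snd
    exact hk.mul (h1.sub h2)
  exact (this.stronglyMeasurable.integral_prod_right).measurable

lemma integrable_kernel {k : ℝ → ℝ → ℝ} (hk : Measurable (Function.uncurry k)) {η : ℝ}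
    (hη : ∀ x ∈ UI, ∀ y ∈ UI, |k x y| ≤ η) {v : ℝ → ℝ} (hv : Integrable v (volume.restrict UI))
    {x : ℝ} (hx : x ∈ UI) : Integrable (fun y => k x y * v y) (volume.restrict UI) := by
  refine hv.bdd_mul (c := η) (hk.comp measurable_prodMk_left).aestronglyMeasurable ?_
  exact (ae_restrict_iff' measurableSet_UI).2 (ae_of_all _ fun y hy => hη x hx y hy)

/-- Pointwise bound for the Laplacian of a kernel bounded by `η`. -/
lemma lapApply_sq_le {k : ℝ → ℝ → ℝ} (hk : Measurable (Function.uncurry k)) {η : ℝ}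
    (hη : ∀ x ∈ UI, ∀ y ∈ UI, |k x y| ≤ η) {u : ℝ → ℝ} (hu : MemL2 u) {x : ℝ} (hx : x ∈ UI) :
    lapApply k u x ^ 2 ≤ 2 * η ^ 2 * (u x ^ 2 + ∫ y in UI, u y ^ 2) := by
  have hd : Integrable (fun y => u x - u y) (volume.restrict UI) :=
    (integrable_const _).sub hu.integrable
  have hi := integrable_kernel hk hη hd hx
  have hb : Integrable (fun y => 2 * η ^ 2 * (u x ^ 2 + u y ^ 2)) (volume.restrict UI) :=
    ((integrable_const _).add hu.2).const_mul _
  have hpt : ∀ y ∈ UI, (k x y * (u x - u y)) ^ 2 ≤ 2 * η ^ 2 * (u x ^ 2 + u y ^ 2) := by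
    intro y hy
    have h1 : k x y ^ 2 ≤ η ^ 2 := sq_le_sq' (by linarith [(abs_le.1 (hη x hx y hy)).1])
      (abs_le.1 (hη x hx y hy)).2
    have h2 : (u x - u y) ^ 2 ≤ 2 * (u x ^ 2 + u y ^ 2) := by nlinarith [sq_nonneg (u x + u y)]
    calc _ = k x y ^ 2 * (u x - u y) ^ 2 := by ring
      _ ≤ η ^ 2 * (2 * (u x ^ 2 + u y ^ 2)) := by gcongr
      _ = _ := by ring
  have hae : ∀ᵐ y ∂(volume.restrict UI),
      (k x y * (u x - u y)) ^ 2 ≤ 2 * η ^ 2 * (u x ^ 2 + u y ^ 2) :=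
    (ae_restrict_iff' measurableSet_UI).2 (ae_of_all _ hpt)
  have hi2 : Integrable (fun y => (k x y * (u x - u y)) ^ 2) (volume.restrict UI) := by
    refine hb.mono' (hi.aestronglyMeasurable.pow 2) ?_
    filter_upwards [hae] with y hy
    rw [Real.norm_of_nonneg (sq_nonneg _)]
    exact hy
  have h3 := sq_integral_le (μ := volume.restrict UI) (by simp) hi hi2
  rw [probReal_univ, one_mul] at h3
  refine h3.trans ((integral_mono_ae hi2 hb hae).trans (le_of_eq ?_))
  rw [integral_const_mul, integral_add (integrable_const _) hu.2]
  simp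

lemma memL2_lapApply {k : ℝ → ℝ → ℝ} (hk : Measurable (Function.uncurry k)) {η : ℝ}
    (hη : ∀ x ∈ UI, ∀ y ∈ UI, |k x y| ≤ η) {u : ℝ → ℝ} (hu : MemL2 u) :
    MemL2 (lapApply k u) := by
  refine ⟨measurable_lapApply hk hu.1, ?_⟩
  have hb : Integrable (fun x => 2 * η ^ 2 * (u x ^ 2 + ∫ y in UI, u y ^ 2))
      (volume.restrict UI) := (hu.2.add (integrable_const _)).const_mul _
  refine hb.mono' ((measurable_lapApply hk hu.1).pow_const 2).aestronglyMeasurable ?_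
  refine (ae_restrict_iff' measurableSet_UI).2 (ae_of_all _ fun x hx => ?_)
  rw [Real.norm_of_nonneg (sq_nonneg _)]
  exact lapApply_sq_le hk hη hu hx

lemma integral_sq_of_l2 {u : ℝ → ℝ} (h : l2 u = 1) : ∫ x in UI, u x ^ 2 = 1 := by
  rw [l2_eq_sqrt, Real.sqrt_eq_one] at h
  exact h

/-- A kernel bounded by `η` on the unit square has Laplacian of norm at most `2 η`. -/
lemma l2_lapApply_le {k : ℝ → ℝ → ℝ} (hk : Measurable (Function.uncurry k)) {η : ℝ}
    (h0 : 0 ≤ η) (hη : ∀ x ∈ UI, ∀ y ∈ UI, |k x y| ≤ η) {u : ℝ → ℝ} (hu : MemL2 u)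
    (h1 : l2 u = 1) : l2 (lapApply k u) ≤ 2 * η := by
  have h2 := integral_sq_of_l2 h1
  rw [l2_eq_sqrt]
  refine Real.sqrt_le_iff.2 ⟨by positivity, ?_⟩
  have h3 : ∫ x in UI, lapApply k u x ^ 2 ≤
      ∫ x in UI, 2 * η ^ 2 * (u x ^ 2 + ∫ y in UI, u y ^ 2) :=
    setIntegral_mono_on (memL2_lapApply hk hη hu).2
      ((hu.2.add (integrable_const _)).const_mul _) measurableSet_UI
      fun x hx => lapApply_sq_le hk hη hu hx
  refine h3.trans (le_of_eq ?_)
  rw [integral_const_mul, integral_add hu.2 (integrable_const _), h2]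
  simp
  ring

lemma IsGraphon.abs_le {f : ℝ → ℝ → ℝ} (hf : IsGraphon f) : ∀ x ∈ UI, ∀ y ∈ UI, |f x y| ≤ 1 := by
  intro x _ y _
  rw [abs_of_nonneg (hf.2.2 x y).1]
  exact (hf.2.2 x y).2

lemma lapApply_sub {f g : ℝ → ℝ → ℝ} (hf : IsGraphon f) (hg : IsGraphon g) {u : ℝ → ℝ}
    (hu : MemL2 u) {x : ℝ} (hx : x ∈ UI) :
    lapApply (fun x y => f x y - g x y) u x = lapApply f u x - lapApply g u x := by
  have hd : Integrable (fun y => u x - u y) (volume.restrict UI) :=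
    (integrable_const _).sub hu.integrable
  unfold lapApply
  rw [← integral_sub (integrable_kernel hf.2.1 hf.abs_le hd hx)
    (integrable_kernel hg.2.1 hg.abs_le hd hx)]
  exact integral_congr_ae (ae_of_all _ fun y => by ring)

lemma IsGraphon.abs_sub_le {f g : ℝ → ℝ → ℝ} (hf : IsGraphon f) (hg : IsGraphon g) :
    ∀ x ∈ UI, ∀ y ∈ UI, |f x y - g x y| ≤ 1 := by
  intro x _ y _
  have h1 := hf.2.2 x y
  have h2 := hg.2.2 x y
  rw [_root_.abs_le]
  constructor <;> linarith [h1.1, h1.2, h2.1, h2.2]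

lemma measurable_sub_kernel {f g : ℝ → ℝ → ℝ} (hf : IsGraphon f) (hg : IsGraphon g) :
    Measurable (Function.uncurry fun x y => f x y - g x y) :=
  hf.2.1.sub hg.2.1

lemma lapNorm_le_add {f g : ℝ → ℝ → ℝ} (hf : IsGraphon f) (hg : IsGraphon g) {δ : ℝ}
    (h : ∀ u, MemL2 u → l2 u = 1 → l2 (lapApply (fun x y => f x y - g x y) u) ≤ δ) :
    lapNorm f ≤ lapNorm g + δ := by
  refine csSup_le ⟨_, fun _ => 1, ⟨measurable_const, ?_⟩, ?_, rfl⟩ ?_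
  · exact integrable_const _
  · rw [l2_eq_sqrt]
    simp
  · rintro c ⟨u, hu, h1, rfl⟩
    have hbdd : BddAbove {c | ∃ u : ℝ → ℝ, MemL2 u ∧ l2 u = 1 ∧ c = l2 (lapApply g u)} := by
      refine ⟨2 * 1, ?_⟩
      rintro c ⟨v, hv, hv1, rfl⟩
      exact l2_lapApply_le hg.2.1 zero_le_one hg.abs_le hv hv1
    have hle : l2 (lapApply g u) ≤ lapNorm g := le_csSup hbdd ⟨u, hu, h1, rfl⟩
    have hmg := memL2_lapApply hg.2.1 hg.abs_le hu
    have hmd := memL2_lapApply (measurable_sub_kernel hf hg) (hf.abs_sub_le hg) hu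
    have hms : MemL2 (lapApply g u + lapApply (fun x y => f x y - g x y) u) :=
      ⟨hmg.1.add hmd.1, ((hmg.memLp.add hmd.memLp).integrable_sq)⟩
    have heq : l2 (lapApply f u) = l2 (lapApply g u + lapApply (fun x y => f x y - g x y) u) := by
      refine l2_congr fun x hx => ?_
      rw [Pi.add_apply, lapApply_sub hf hg hu hx]
      ring
    rw [heq]
    exact (l2_add_le hmg hmd hms).trans (add_le_add hle (h u hu h1))

/-- The Laplacian norm is Lipschitz with respect to the operator norm of the difference. -/
lemma abs_lapNorm_sub_le {f g : ℝ → ℝ → ℝ} (hf : IsGraphon f) (hg : IsGraphon g) {δ : ℝ}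
    (h : ∀ u, MemL2 u → l2 u = 1 → l2 (lapApply (fun x y => f x y - g x y) u) ≤ δ) :
    |lapNorm f - lapNorm g| ≤ δ := by
  have h1 := lapNorm_le_add hf hg h
  have h2 := lapNorm_le_add (δ := δ) hg hf (by
    intro u hu hu1
    refine le_trans (le_of_eq ?_) (h u hu hu1)
    rw [l2_eq_sqrt, l2_eq_sqrt]
    congr 1
    refine setIntegral_congr_fun measurableSet_UI fun x hx => ?_
    rw [lapApply_sub hf hg hu hx, lapApply_sub hg hf hu hx]
    ring)
  rw [abs_le]
  constructor <;> linarith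

/-! ### Block kernels -/

lemma blk_unique {N : ℕ} {i i' : Fin N} {x : ℝ} (h : x ∈ blk N i) (h' : x ∈ blk N i') :
    i = i' := by
  have hN : (0 : ℝ) < N := by exact_mod_cast i.pos
  obtain ⟨h1, h2⟩ := h
  obtain ⟨h3, h4⟩ := h'
  rw [div_le_iff₀ hN] at h1 h3
  rw [lt_div_iff₀ hN] at h2 h4
  have e1 : ((i : ℕ) : ℝ) < (i' : ℕ) + 1 := by linarith
  have e2 : ((i' : ℕ) : ℝ) < (i : ℕ) + 1 := by linarith
  have e3 : (i : ℕ) < (i' : ℕ) + 1 := by exact_mod_cast e1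
  have e4 : (i' : ℕ) < (i : ℕ) + 1 := by exact_mod_cast e2
  exact Fin.ext (by omega)

lemma measurableSet_blk {N : ℕ} (i : Fin N) : MeasurableSet (blk N i) := measurableSet_Ico

lemma left_mem_blk {N : ℕ} (i : Fin N) : ((i : ℕ) : ℝ) / N ∈ blk N i := by
  have hN : (0 : ℝ) < N := by exact_mod_cast i.pos
  exact ⟨le_rfl, by gcongr; linarith⟩

lemma volume_real_blk {N : ℕ} (i : Fin N) : (volume.restrict (blk N i)).real univ = (N : ℝ)⁻¹ := by
  rw [measureReal_restrict_apply_univ, blk, Real.volume_real_Ico_of_le]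
  · ring
  · have h := (left_mem_blk i).2.le
    exact h

lemma blk_subset {N : ℕ} (i : Fin N) : blk N i ⊆ UI := by
  have hN : (0 : ℝ) < N := by exact_mod_cast i.pos
  rintro x ⟨h1, h2⟩
  refine ⟨le_trans (by positivity) h1, h2.le.trans ?_⟩
  rw [div_le_one hN]
  exact_mod_cast i.isLt

lemma iUnion_blk {N : ℕ} (hN : 0 < N) : ⋃ i, blk N i = Set.Ico (0 : ℝ) 1 := by
  have hN' : (0 : ℝ) < N := by exact_mod_cast hN
  apply Set.Subset.antisymm
  · refine Set.iUnion_subset fun i x hx => ⟨(blk_subset i hx).1, hx.2.trans_le ?_⟩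
    rw [div_le_one hN']
    exact_mod_cast i.isLt
  · rintro x ⟨h0, h1⟩
    have hx : 0 ≤ x * N := by positivity
    have hlt : ⌊x * N⌋₊ < N := by
      rw [Nat.floor_lt hx]
      nlinarith
    refine Set.mem_iUnion.2 ⟨⟨⌊x * N⌋₊, hlt⟩, ?_, ?_⟩
    · rw [div_le_iff₀ hN']
      exact Nat.floor_le hx
    · rw [lt_div_iff₀ hN']
      exact Nat.lt_floor_add_one _

lemma integral_eq_sum_blk {N : ℕ} (hN : 0 < N) {F : ℝ → ℝ}
    (hF : Integrable F (volume.restrict UI)) :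
    ∫ x in UI, F x = ∑ i : Fin N, ∫ x in blk N i, F x := by
  have h1 : ∫ x in UI, F x = ∫ x in Set.Ico (0 : ℝ) 1, F x := integral_Icc_eq_integral_Ico
  rw [h1, ← iUnion_blk hN]
  refine integral_iUnion_fintype (fun i => measurableSet_blk i) ?_
    fun i => IntegrableOn.mono_set hF (blk_subset i)
  intro i j hij
  exact Set.disjoint_left.2 fun x hx hx' => hij (blk_unique hx hx')

lemma empGraphon_blk {N : ℕ} (A : AdjMat N) {i j : Fin N} {x y : ℝ} (hx : x ∈ blk N i)
    (hy : y ∈ blk N j) : empGraphon N A x y = if A.1 i j then 1 else 0 := by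
  classical
  unfold empGraphon
  refine if_congr ⟨?_, fun h => ⟨i, j, h, hx, hy⟩⟩ rfl rfl
  rintro ⟨i', j', h, hx', hy'⟩
  rwa [blk_unique hx hx', blk_unique hy hy']

lemma isGraphon_empGraphon (N : ℕ) (A : AdjMat N) : IsGraphon (empGraphon N A) := by
  classical
  refine ⟨fun x y => ?_, ?_, fun x y => ?_⟩
  · unfold empGraphon
    refine if_congr ⟨?_, ?_⟩ rfl rfl <;>
    · rintro ⟨i, j, h, hx, hy⟩
      exact ⟨j, i, by rw [A.2.1 j i]; exact h, hy, hx⟩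
  · have hset : {q : ℝ × ℝ | ∃ i j : Fin N, A.1 i j = true ∧ q.1 ∈ blk N i ∧ q.2 ∈ blk N j} =
        ⋃ i, ⋃ j, {q : ℝ × ℝ | A.1 i j = true ∧ q.1 ∈ blk N i ∧ q.2 ∈ blk N j} := by
      ext q
      simp
    have hm : MeasurableSet
        {q : ℝ × ℝ | ∃ i j : Fin N, A.1 i j = true ∧ q.1 ∈ blk N i ∧ q.2 ∈ blk N j} := by
      rw [hset]
      refine MeasurableSet.iUnion fun i => MeasurableSet.iUnion fun j => ?_
      exact (MeasurableSet.const _).inter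
        ((measurable_fst (measurableSet_blk i)).inter (measurable_snd (measurableSet_blk j)))
    exact Measurable.ite hm measurable_const measurable_const
  · unfold empGraphon
    split_ifs <;> simp

/-- Difference of the adjacency matrix and the edge probabilities, diagonal included. -/
def rawDiff {N : ℕ} (p : Fin N → Fin N → ℝ) (A : AdjMat N) (i j : Fin N) : ℝ :=
  (if A.1 i j then 1 else 0) - p i j

lemma rawDiff_sum {N : ℕ} (p : Fin N → Fin N → ℝ) (A : AdjMat N) (i : Fin N) (U : Fin N → ℝ) :
    ∑ j, rawDiff p A i j * U j = ∑ j, cAdj p A i j * U j - p i i * U i := by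
  have : ∀ j, rawDiff p A i j * U j =
      cAdj p A i j * U j - if i = j then p i j * U j else 0 := by
    intro j
    unfold rawDiff cAdj
    by_cases h : i = j
    · subst h
      simp [A.2.2 i]
    · simp [h]
  simp_rw [this, Finset.sum_sub_distrib]
  simp

/-- The `ℓ²` operator norm of a symmetric matrix `B` satisfies `‖B‖⁴ ≤ tr (B⁴)`. -/
lemma cAdj_mulVec_le {N : ℕ} {p : Fin N → Fin N → ℝ} (hs : ∀ i j, p i j = p j i) (A : AdjMat N)
    (U : Fin N → ℝ) {M : ℝ} (hM : 0 ≤ M) (hC : ∑ i, ∑ k, cSq p A i k ^ 2 ≤ M ^ 2) :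
    ∑ i, (∑ j, cAdj p A i j * U j) ^ 2 ≤ M * ∑ j, U j ^ 2 := by
  have h1 : ∑ i, (∑ j, cAdj p A i j * U j) ^ 2 =
      ∑ q : Fin N × Fin N, (U q.1 * U q.2) * cSq p A q.1 q.2 := by
    rw [Fintype.sum_prod_type]
    simp_rw [cSq, sq, Finset.sum_mul_sum, Finset.mul_sum]
    rw [Finset.sum_comm]
    refine Finset.sum_congr rfl fun j _ => ?_
    rw [Finset.sum_comm]
    refine Finset.sum_congr rfl fun k _ => Finset.sum_congr rfl fun l _ => ?_
    rw [cAdj_symm hs A j l, cAdj_symm hs A k l]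
    ring
  have h2 := Finset.sum_mul_sq_le_sq_mul_sq Finset.univ
    (fun q : Fin N × Fin N => U q.1 * U q.2) (fun q => cSq p A q.1 q.2)
  rw [← h1] at h2
  have h3 : ∑ q : Fin N × Fin N, (U q.1 * U q.2) ^ 2 = (∑ j, U j ^ 2) ^ 2 := by
    rw [Fintype.sum_prod_type, sq (∑ j, U j ^ 2), Finset.sum_mul_sum]
    simp_rw [mul_pow]
  rw [h3, Fintype.sum_prod_type] at h2
  have h4 : 0 ≤ ∑ j, U j ^ 2 := Finset.sum_nonneg fun j _ => sq_nonneg _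
  refine abs_le_of_sq_le_sq' ?_ (by positivity) |>.2
  calc _ ≤ _ := h2
    _ ≤ (∑ j, U j ^ 2) ^ 2 * M ^ 2 := by gcongr
    _ = _ := by ring

/-- On the `i`-th block, integration against the difference kernel is a matrix-vector product. -/
lemma integral_diff_kernel {N : ℕ} (hN : 0 < N) {g : ℝ → ℝ → ℝ} (hg : IsGraphon g)
    (hb : IsBlockGraphon N g) (A : AdjMat N) {v : ℝ → ℝ} (hv : Integrable v (volume.restrict UI))
    {i : Fin N} {x : ℝ} (hx : x ∈ blk N i) :
    ∫ y in UI, (empGraphon N A x y - g x y) * v y =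
      ∑ j, rawDiff (pOf N g) A i j * ∫ y in blk N j, v y := by
  have he := isGraphon_empGraphon N A
  rw [integral_eq_sum_blk hN (integrable_kernel (measurable_sub_kernel he hg)
    (he.abs_sub_le hg) hv (blk_subset i hx))]
  refine Finset.sum_congr rfl fun j _ => ?_
  rw [← integral_const_mul]
  refine setIntegral_congr_fun (measurableSet_blk j) fun y hy => ?_
  rw [empGraphon_blk A hx hy, rawDiff, pOf,
    hb i j x hx _ (left_mem_blk i) y hy _ (left_mem_blk j)]

/-- Deterministic comparison: if `1 ≤ δ N`, all centred degrees are at most `δ N` and `tr (B⁴) ≤ (δ N)⁴`,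
then the Laplacian of the difference kernel has norm at most `4 δ`. -/
lemma l2_lapApply_diff_le {N : ℕ} (hN : 0 < N) {g : ℝ → ℝ → ℝ} (hg : IsGraphon g)
    (hb : IsBlockGraphon N g) (A : AdjMat N) {δ : ℝ} (hδ : 1 ≤ δ * N)
    (hd : ∀ i, |∑ j, cAdj (pOf N g) A i j| ≤ δ * N)
    (hC : ∑ i, ∑ k, cSq (pOf N g) A i k ^ 2 ≤ (δ * N) ^ 4)
    {u : ℝ → ℝ} (hu : MemL2 u) (h1 : l2 u = 1) :
    l2 (lapApply (fun x y => empGraphon N A x y - g x y) u) ≤ 4 * δ := by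
  have hN' : (0 : ℝ) < N := by exact_mod_cast hN
  have hδ0 : 0 < δ := pos_of_mul_pos_left (lt_of_lt_of_le one_pos hδ) hN'.le
  have he := isGraphon_empGraphon N A
  have hk := measurable_sub_kernel he hg
  have hkb := he.abs_sub_le hg
  have hs : ∀ i j, pOf N g i j = pOf N g j i := fun i j => hg.1 _ _
  have hp : ∀ i j, pOf N g i j ∈ Set.Icc (0 : ℝ) 1 := fun i j => hg.2.2 _ _
  set U : Fin N → ℝ := fun j => ∫ y in blk N j, u y with hU
  set V : Fin N → ℝ := fun i => ∑ j, rawDiff (pOf N g) A i j * U j with hV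
  have hu2 := integral_sq_of_l2 h1
  have hui : ∀ i : Fin N, Integrable (fun x => u x ^ 2) (volume.restrict (blk N i)) :=
    fun i => IntegrableOn.mono_set hu.2 (blk_subset i)
  have hfin : ∀ i : Fin N, IsFiniteMeasure (volume.restrict (blk N i)) := fun i =>
    ⟨by rw [Measure.restrict_apply_univ]
        exact (measure_mono (blk_subset i)).trans_lt (by simp [UI])⟩
  -- on each block the operator is a multiplication operator minus a matrix
  have hval : ∀ i, ∀ x ∈ blk N i, lapApply (fun x y => empGraphon N A x y - g x y) u x =
      u x * ((∑ j, rawDiff (pOf N g) A i j * 1) * (N : ℝ)⁻¹) - V i := by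
    intro i x hx
    have e1 := integral_diff_kernel hN hg hb A (v := fun _ => 1) (integrable_const _) hx
    have e2 := integral_diff_kernel hN hg hb A hu.integrable hx
    have e3 : ∀ j : Fin N, ∫ y in blk N j, (1 : ℝ) = (N : ℝ)⁻¹ := by
      intro j
      rw [integral_const, volume_real_blk]
      simp
    simp_rw [e3] at e1
    unfold lapApply
    simp_rw [mul_sub]
    rw [integral_sub, e2, Finset.sum_mul]
    · congr 1
      simp only [mul_one] at e1 ⊢
      rw [← e1, integral_mul_const, mul_comm]
    · exact integrable_kernel hk hkb (integrable_const _) (blk_subset i hx)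
    · exact integrable_kernel hk hkb hu.integrable (blk_subset i hx)
  have hdeg : ∀ i, |(∑ j, rawDiff (pOf N g) A i j * 1) * (N : ℝ)⁻¹| ≤ 2 * δ := by
    intro i
    rw [rawDiff_sum, abs_mul, abs_of_pos (inv_pos.2 hN'), ← div_eq_mul_inv, div_le_iff₀ hN']
    simp only [mul_one]
    have e1 := hd i
    have e2 := hp i i
    rw [abs_le] at e1 ⊢
    constructor <;> linarith [e1.1, e1.2, e2.1, e2.2]
  have hUsum : (N : ℝ) * ∑ j, U j ^ 2 ≤ 1 := by
    rw [← hu2, integral_eq_sum_blk hN hu.2, Finset.mul_sum]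
    refine Finset.sum_le_sum fun j _ => ?_
    have := sq_integral_le (μ := volume.restrict (blk N j))
      (by rw [volume_real_blk]; positivity) (IntegrableOn.mono_set hu.integrable (blk_subset j))
      (hui j)
    rw [volume_real_blk] at this
    calc (N : ℝ) * U j ^ 2 ≤ N * ((N : ℝ)⁻¹ * ∫ x in blk N j, u x ^ 2) := by gcongr
      _ = _ := by field_simp
  have hVsum : ∑ i, V i ^ 2 ≤ 4 * δ ^ 2 * N := by
    have e1 := cAdj_mulVec_le hs A U (M := (δ * N) ^ 2) (by positivity)
      (hC.trans (le_of_eq (by ring)))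
    have e2 : ∀ i, V i ^ 2 ≤ 2 * (∑ j, cAdj (pOf N g) A i j * U j) ^ 2 + 2 * U i ^ 2 := by
      intro i
      simp only [hV]
      rw [rawDiff_sum]
      have e3 := hp i i
      have e4 : (pOf N g i i * U i) ^ 2 ≤ U i ^ 2 := by
        rw [mul_pow]
        exact mul_le_of_le_one_left (sq_nonneg _) (pow_le_one₀ e3.1 e3.2)
      nlinarith [sq_nonneg (∑ j, cAdj (pOf N g) A i j * U j + pOf N g i i * U i)]
    have e5 : ∑ i, V i ^ 2 ≤ 2 * ((δ * N) ^ 2 * ∑ j, U j ^ 2) + 2 * ∑ j, U j ^ 2 := by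
      refine (Finset.sum_le_sum fun i _ => e2 i).trans ?_
      rw [Finset.sum_add_distrib, ← Finset.mul_sum, ← Finset.mul_sum]
      linarith
    have e6 : 0 ≤ ∑ j, U j ^ 2 := Finset.sum_nonneg fun j _ => sq_nonneg _
    have e7 : 1 ≤ (δ * N) ^ 2 := one_le_pow₀ hδ
    have e8 : ∑ j, U j ^ 2 ≤ (δ * N) ^ 2 * ∑ j, U j ^ 2 := le_mul_of_one_le_left e6 e7
    calc ∑ i, V i ^ 2 ≤ 4 * ((δ * N) ^ 2 * ∑ j, U j ^ 2) := by linarith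
      _ = 4 * δ ^ 2 * N * (N * ∑ j, U j ^ 2) := by ring
      _ ≤ 4 * δ ^ 2 * N * 1 := by gcongr
      _ = _ := by ring
  rw [l2_eq_sqrt]
  refine Real.sqrt_le_iff.2 ⟨by positivity, ?_⟩
  rw [integral_eq_sum_blk hN (memL2_lapApply hk hkb hu).2]
  have hblkle : ∀ i : Fin N,
      ∫ x in blk N i, lapApply (fun x y => empGraphon N A x y - g x y) u x ^ 2 ≤
        8 * δ ^ 2 * (∫ x in blk N i, u x ^ 2) + 2 * (N : ℝ)⁻¹ * V i ^ 2 := by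
    intro i
    have hfi := hfin i
    have e1 : ∫ x in blk N i, (8 * δ ^ 2 * u x ^ 2 + 2 * V i ^ 2) =
        8 * δ ^ 2 * (∫ x in blk N i, u x ^ 2) + 2 * (N : ℝ)⁻¹ * V i ^ 2 := by
      rw [integral_add ((hui i).const_mul _) (integrable_const _), integral_const_mul,
        integral_const, volume_real_blk, smul_eq_mul]
      ring
    rw [← e1]
    refine setIntegral_mono_on
      (IntegrableOn.mono_set (memL2_lapApply hk hkb hu).2 (blk_subset i))
      (((hui i).const_mul _).add (integrable_const _)) (measurableSet_blk i) fun x hx => ?_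
    rw [hval i x hx]
    have e2 := hdeg i
    set d := (∑ j, rawDiff (pOf N g) A i j * 1) * (N : ℝ)⁻¹
    have e3 : d ^ 2 ≤ (2 * δ) ^ 2 := sq_le_sq' (abs_le.1 e2).1 (abs_le.1 e2).2
    have e4 : u x ^ 2 * d ^ 2 ≤ u x ^ 2 * (2 * δ) ^ 2 := by gcongr
    nlinarith [sq_nonneg (u x * d + V i)]
  refine (Finset.sum_le_sum fun i _ => hblkle i).trans ?_
  rw [Finset.sum_add_distrib, ← Finset.mul_sum, ← Finset.mul_sum, ← integral_eq_sum_blk hN hu.2,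
    hu2]
  calc 8 * δ ^ 2 * 1 + 2 * (N : ℝ)⁻¹ * ∑ i, V i ^ 2
      ≤ 8 * δ ^ 2 * 1 + 2 * (N : ℝ)⁻¹ * (4 * δ ^ 2 * N) := by gcongr
    _ = (4 * δ) ^ 2 := by
      field_simp
      ring

/-! ### Probability of a large deviation -/

/-- Union and Markov bounds: outside an event of probability `O(1 / N)` the hypotheses of the
deterministic comparison hold. -/
lemma errgProb_bad_le {N : ℕ} (hN : 0 < N) {p : Fin N → Fin N → ℝ}
    (hp : ∀ i j, p i j ∈ Set.Icc (0 : ℝ) 1) (hs : ∀ i j, p i j = p j i) {δ : ℝ} (hδ : 0 < δ)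
    (hδ1 : δ ≤ 1) {E : Set (AdjMat N)}
    (hE : ∀ A ∈ E, (∀ i, |∑ j, cAdj p A i j| ≤ δ * N) →
      ¬ ∑ i, ∑ k, cSq p A i k ^ 2 ≤ (δ * N) ^ 4) :
    errgProb N p E ≤ (66 / δ ^ 4) / N := by
  have hN' : (0 : ℝ) < N := by exact_mod_cast hN
  have hM : 0 < δ * N := by positivity
  -- `t = δ / 2` minimizes the exponent `t ^ 2 * N - t * δ * N`
  set t : ℝ := δ / 2 with ht
  have ht1 : |t| ≤ 1 := by
    rw [abs_of_pos (by positivity)]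
    linarith
  have hb := errgProb_le_expG (E := E) hp (F := fun A =>
    ∑ s : Option (Fin N × Bool), match s with
      | none => (∑ i, ∑ k, cSq p A i k ^ 2) * ((δ * N) ^ 4)⁻¹
      | some (i, b) => Real.exp ((if b then t else -t) * ∑ j, cAdj p A i j) *
          Real.exp (-(t * (δ * N)))) ?_ ?_
  · refine hb.trans ?_
    rw [expG_sum, Fintype.sum_option]
    simp only
    rw [expG_mul_const]
    have e1 : expG N p (fun A => ∑ i, ∑ k, cSq p A i k ^ 2) * ((δ * N) ^ 4)⁻¹ ≤
        2 * (N : ℝ) ^ 3 * ((δ * N) ^ 4)⁻¹ :=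
      mul_le_mul_of_nonneg_right (expG_trace_four hp hs) (by positivity)
    have e2 : ∀ q : Fin N × Bool, expG N p (fun A =>
        Real.exp ((if q.2 then t else -t) * ∑ j, cAdj p A q.1 j) * Real.exp (-(t * (δ * N)))) ≤
        32 / (δ ^ 4 * N ^ 2) := by
      intro q
      rw [expG_mul_const]
      have e3 := expG_exp_deg hp hs q.1 (t := if q.2 then t else -t)
        (by split_ifs <;> simpa using ht1)
      have e4 : (if q.2 then t else -t) ^ 2 = t ^ 2 := by split_ifs <;> ring
      rw [e4] at e3
      have e5 : Real.exp (t ^ 2 * N) * Real.exp (-(t * (δ * N))) = (Real.exp (δ ^ 2 / 4 * N))⁻¹ := by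
        rw [← Real.exp_add, ← Real.exp_neg, ht]
        congr 1
        ring
      have e6 : δ ^ 4 * N ^ 2 / 32 ≤ Real.exp (δ ^ 2 / 4 * N) := by
        have e7 := Real.quadratic_le_exp_of_nonneg (x := δ ^ 2 / 4 * N) (by positivity)
        have e8 : 0 ≤ δ ^ 2 / 4 * N := by positivity
        nlinarith
      calc _ ≤ Real.exp (t ^ 2 * N) * Real.exp (-(t * (δ * N))) :=
            mul_le_mul_of_nonneg_right e3 (Real.exp_pos _).le
        _ = (Real.exp (δ ^ 2 / 4 * N))⁻¹ := e5
        _ ≤ (δ ^ 4 * N ^ 2 / 32)⁻¹ := inv_anti₀ (by positivity) e6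
        _ = _ := by rw [inv_div]
    refine (add_le_add e1 (Finset.sum_le_sum fun q _ => e2 q)).trans (le_of_eq ?_)
    simp
    field_simp
    ring
  · intro A
    refine Finset.sum_nonneg fun s _ => ?_
    rcases s with _ | ⟨i, b⟩
    · exact mul_nonneg (Finset.sum_nonneg fun i _ => Finset.sum_nonneg fun k _ => sq_nonneg _)
        (by positivity)
    · positivity
  · intro A hA
    have hnn : ∀ s ∈ (Finset.univ : Finset (Option (Fin N × Bool))), (0 : ℝ) ≤ (match s with
      | none => (∑ i, ∑ k, cSq p A i k ^ 2) * ((δ * N) ^ 4)⁻¹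
      | some (i, b) => Real.exp ((if b then t else -t) * ∑ j, cAdj p A i j) *
          Real.exp (-(t * (δ * N)))) := by
      intro s _
      rcases s with _ | ⟨i, b⟩
      · exact mul_nonneg (Finset.sum_nonneg fun i _ => Finset.sum_nonneg fun k _ => sq_nonneg _)
          (by positivity)
      · positivity
    by_cases hd : ∀ i, |∑ j, cAdj p A i j| ≤ δ * N
    · have h1 := hE A hA hd
      refine le_trans ?_ (Finset.single_le_sum hnn (Finset.mem_univ none))
      simp only
      rw [← div_eq_mul_inv, one_le_div (by positivity)]
      exact (not_le.1 h1).le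
    · push Not at hd
      obtain ⟨i, hi⟩ := hd
      have htp : 0 < t := by positivity
      rcases lt_abs.1 hi with h1 | h1
      · refine le_trans ?_ (Finset.single_le_sum hnn (Finset.mem_univ (some (i, true))))
        simp only [if_true]
        rw [← Real.exp_add, Real.one_le_exp_iff]
        nlinarith
      · refine le_trans ?_ (Finset.single_le_sum hnn (Finset.mem_univ (some (i, false))))
        simp only [Bool.false_eq_true, if_false]
        rw [← Real.exp_add, Real.one_le_exp_iff]
        nlinarith

/-- **Convergence in probability of the Laplacian operator norm of the empirical
graphon to that of the reference graphon.** -/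
theorem laplacian_norm_convergence_in_probability
    (h : ℝ → ℝ → ℝ) (hh : GraphonAssump h)
    (hN : ℕ → ℝ → ℝ → ℝ) (hg : ∀ N, IsGraphon (hN N))
    (hblk : ∀ N, IsBlockGraphon N (hN N))
    (hsup : SupConv h hN)
    (ε : ℝ) (hε : 0 < ε) :
    Tendsto (fun N : ℕ =>
        errgProb N (pOf N (hN N))
          {A : AdjMat N | ε < |lapNorm (empGraphon N A) - lapNorm h|})
      atTop (nhds 0) := by
  -- `4 * δ ≤ ε / 4` controls the random part, `2 * (ε / 8)` the deterministic one
  set δ : ℝ := min (ε / 16) 1 with hδdef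
  have hδ : 0 < δ := lt_min (by positivity) one_pos
  have hδ1 : δ ≤ 1 := min_le_right _ _
  have hδε : δ ≤ ε / 16 := min_le_left _ _
  obtain ⟨N₀, hN₀⟩ := hsup (ε / 8) (by positivity)
  obtain ⟨N₁, hN₁⟩ := exists_nat_ge (1 / δ)
  have hp : ∀ N i j, pOf N (hN N) i j ∈ Set.Icc (0 : ℝ) 1 := fun N i j => (hg N).2.2 _ _
  refine squeeze_zero' (Eventually.of_forall fun N => errgProb_nonneg (hp N) _) ?_
    (tendsto_const_div_atTop_nhds_zero_nat (66 / δ ^ 4))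
  filter_upwards [eventually_ge_atTop N₀, eventually_ge_atTop N₁, eventually_gt_atTop 0]
    with N h0 h1 hpos
  refine errgProb_bad_le hpos (hp N) (fun i j => (hg N).1 _ _) hδ hδ1 fun A hA hd hC => ?_
  have hδN : 1 ≤ δ * N := by
    have h2 : 1 / δ ≤ N := hN₁.trans (by exact_mod_cast h1)
    rwa [div_le_iff₀ hδ, mul_comm] at h2
  have h3 := abs_lapNorm_sub_le (isGraphon_empGraphon N A) (hg N)
    fun u hu hu1 => l2_lapApply_diff_le hpos (hg N) (hblk N) A hδN hd hC hu hu1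
  have h4 := abs_lapNorm_sub_le (hg N) hh.1 fun u hu hu1 =>
    l2_lapApply_le (measurable_sub_kernel (hg N) hh.1) (by positivity) (hN₀ N h0) hu hu1
  have h5 : ε < |lapNorm (empGraphon N A) - lapNorm h| := hA
  have h6 := abs_sub_le (lapNorm (empGraphon N A)) (lapNorm (hN N)) (lapNorm h)
  linarith
end
end
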